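/- Let (Y,d) be a complete metric space, p ∈ (1,∞), and let f : [0,1] → Y be Borel measurable with ∫_0^1 d(f(u),y_0)^p du < ∞ for some y_0 ∈ Y, and suppose sup_{0<h<1} ∫_0^{1−h} ( d(f(u+h),f(u)) / h )^p du < ∞. Then there exists a curve f̃ ∈ AC^p(Y) (in particular f̃ is continuous) such that f(u) = f̃(u) for Lebesgue-almost every u ∈ [0,1]. -/

import Mathlib

open MeasureTheory Set Filter
open scoped ENNReal

open TopologicalSpace Metric
open scoped NNReal Topology Cardinal

/-!
Write `D_h f` for the difference quotient of `f` at scale `h`. Lebesgue's differentiation theorem,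
applied to the truncated distances `min (d(y, f ·)) N` for `y` in a countable dense set, gives
`d(f a, f b) ≤ liminf_{h → 0} ∫_a^b D_h f` for almost all `a` and `b`. By Hölder's inequality and
the energy bound, `f` is then Hölder continuous on a set of full measure, so it agrees almost
everywhere with a continuous curve `g`. The same inequality holds for `g` at all `a` and `b`, which
makes `g` absolutely continuous. Its speed is dominated by `m = liminf_h D_h g`, and `m` is in `L^p`
by Fatou's lemma.

Separability of the range of `f` is automatic: an uncountable `ε`-separated set in the range of a
Borel function on `ℝ` would yield an uncountable Borel set all of whose subsets are Borel, while
there are only continuum many Borel sets.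
-/

section Separability

theorem exists_not_measurableSet_of_continuum_le_mk {α : Type*} [MeasurableSpace α]
    [MeasurableSpace.CountablyGenerated α] (h : 𝔠 ≤ #α) : ∃ s : Set α, ¬MeasurableSet s := by
  by_contra! hmeas
  have hcard : #{s : Set α | MeasurableSet s} ≤ 𝔠 := by
    rw [← MeasurableSpace.generateFrom_countableGeneratingSet (α := α)]
    exact MeasurableSpace.cardinal_measurableSet_le_continuum
      (MeasurableSpace.countable_countableGeneratingSet.le_aleph0.trans
        Cardinal.aleph0_le_continuum)
  rw [show {s : Set α | MeasurableSet s} = univ from eq_univ_of_forall hmeas, Cardinal.mk_univ,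
    Cardinal.mk_set] at hcard
  exact ((Cardinal.cantor _).trans_le hcard).not_ge h

theorem countable_of_standardBorelSpace_of_discreteMeasurableSpace (α : Type*) [MeasurableSpace α]
    [StandardBorelSpace α] [DiscreteMeasurableSpace α] : Countable α := by
  by_contra hα
  have hcard : 𝔠 ≤ #α := by
    have := Cardinal.lift_mk_eq'.2
      ⟨(PolishSpace.measurableEquivOfNotCountable (β := ℝ) hα not_countable).toEquiv⟩
    simpa [Cardinal.mk_real, Cardinal.lift_continuum, eq_comm] using this.ge
  obtain ⟨s, hs⟩ := exists_not_measurableSet_of_continuum_le_mk hcard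
  exact hs .of_discrete

theorem countable_of_measurable_surjective {α ι : Type*} [MeasurableSpace α] [StandardBorelSpace α]
    [MeasurableSpace ι] [DiscreteMeasurableSpace ι] {f : α → ι} (hf : Measurable f)
    (hsurj : Function.Surjective f) : Countable ι := by
  let σ := Function.surjInv hsurj
  have hσ : ∀ i, f (σ i) = i := Function.surjInv_eq hsurj
  -- `T` is the range of `σ`; writing it as a set of fixed points shows that it is measurable.
  let T : Set α := {x | σ (f x) = x}
  have hT : MeasurableSet T :=
    measurableSet_eq_fun ((Measurable.of_discrete (f := σ)).comp hf) measurable_id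
  have : StandardBorelSpace T := hT.standardBorel
  have hinj : Function.Injective fun x : T ↦ f x := fun x y hxy ↦
    Subtype.ext (x.2.symm.trans ((congrArg σ hxy).trans y.2))
  have : DiscreteMeasurableSpace T := ⟨fun s ↦ by
    rw [← preimage_image_eq s hinj]
    exact (hf.comp measurable_subtype_coe) .of_discrete⟩
  have := countable_of_standardBorelSpace_of_discreteMeasurableSpace T
  exact Function.Surjective.countable (f := fun x : T ↦ f x)
    fun i ↦ ⟨⟨σ i, congrArg σ (hσ i)⟩, hσ i⟩

theorem isSeparable_of_forall_isSeparated_countable {X : Type*} [PseudoEMetricSpace X] {s : Set X}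
    (h : ∀ ε : ℝ≥0, 0 < ε → ∀ t ⊆ s, IsSeparated ε t → t.Countable) : IsSeparable s := by
  obtain ⟨t, -, htc, hst⟩ := EMetric.subset_countable_closure_of_almost_dense_set s fun ε hε ↦ by
    obtain ⟨δ, hδ, hδε⟩ := ENNReal.lt_iff_exists_nnreal_btwn.1 hε
    obtain ⟨N, hN⟩ := zorn_subset {N | N ⊆ s ∧ IsSeparated δ N} fun c hc hchain ↦
      ⟨⋃₀ c, ⟨sUnion_subset fun N hN ↦ (hc hN).1,
        (pairwise_sUnion hchain.directedOn).2 fun N hN ↦ (hc hN).2⟩,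
        fun N hN ↦ subset_sUnion_of_mem hN⟩
    refine ⟨N, h δ (by simpa using hδ) N hN.prop.1 hN.prop.2, ?_⟩
    exact (isCover_iff_subset_iUnion_closedEBall.1 (.of_maximal_isSeparated hN)).trans
      (iUnion₂_mono fun x _ ↦ closedEBall_subset_closedEBall hδε.le)
  exact ⟨t, htc, hst⟩

variable {α Y : Type*} [MeasurableSpace α] [StandardBorelSpace α]

theorem countable_of_isSeparated_of_subset_range [EMetricSpace Y] [MeasurableSpace Y]
    [OpensMeasurableSpace Y] {f : α → Y} (hf : Measurable f) {ε : ℝ≥0} (hε : 0 < ε) {S : Set Y}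
    (hS : S ⊆ range f) (hsep : IsSeparated ε S) : S.Countable := by
  have hclosed : ∀ A ⊆ S, IsClosed A := fun A hA ↦
    isClosed_of_spaced_out (edist_mem_uniformity (ENNReal.coe_pos.2 hε)) fun x hx y hy hxy ↦
      not_lt.2 (hsep (hA hx) (hA hy) hxy).le
  have : DiscreteMeasurableSpace S := ⟨fun A ↦
    ⟨Subtype.val '' A, (hclosed _ (Subtype.coe_image_subset S A)).measurableSet,
      preimage_image_eq A Subtype.val_injective⟩⟩
  have := (hf (hclosed S Subset.rfl).measurableSet).standardBorel
  refine countable_of_measurable_surjective (f := S.restrictPreimage f)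
    (hf.comp measurable_subtype_coe).subtype_mk fun y ↦ ?_
  obtain ⟨x, hx⟩ := hS y.2
  exact ⟨⟨x, mem_preimage.2 (hx ▸ y.2)⟩, Subtype.ext hx⟩

theorem stronglyMeasurable_of_measurable_standardBorelSpace [EMetricSpace Y] [MeasurableSpace Y]
    [BorelSpace Y] {f : α → Y} (hf : Measurable f) : StronglyMeasurable f :=
  stronglyMeasurable_iff_measurable_separable.2 ⟨hf, isSeparable_of_forall_isSeparated_countable
    fun _ hε _ hS hsep ↦ countable_of_isSeparated_of_subset_range hf hε hS hsep⟩

end Separability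

/-- The difference quotient `d(f(x + h), f(x)) / h` of a curve in a metric space, playing the role
of the modulus of a derivative. It is meant for `h > 0`: the denominator is `0` for `h ≤ 0`. -/
noncomputable def diffQuot {X : Type*} [PseudoEMetricSpace X] (f : ℝ → X) (h x : ℝ) : ℝ≥0∞ :=
  edist (f (x + h)) (f x) / ENNReal.ofReal h

section DifferenceQuotient

theorem diffQuot_comp_le {X Z : Type*} [PseudoEMetricSpace X] [PseudoEMetricSpace Z] {φ : X → Z}
    (hφ : LipschitzWith 1 φ) (f : ℝ → X) (h x : ℝ) : diffQuot (φ ∘ f) h x ≤ diffQuot f h x :=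
  ENNReal.div_le_div_right (hφ.edist_le_mul_of_le le_rfl |>.trans_eq (one_mul _)) _

theorem diffQuot_eq_enorm_smul {E : Type*} [NormedAddCommGroup E] [NormedSpace ℝ E] (ψ : ℝ → E)
    {h : ℝ} (hh : 0 < h) (x : ℝ) : diffQuot ψ h x = ‖h⁻¹ • (ψ (x + h) - ψ x)‖ₑ := by
  rw [diffQuot, enorm_smul, edist_eq_enorm_sub, enorm_inv hh.ne', Real.enorm_of_nonneg hh.le,
    mul_comm, ENNReal.div_eq_inv_mul, mul_comm]

variable {E : Type*} [NormedAddCommGroup E] [NormedSpace ℝ E] {ψ : ℝ → E} {a b c : ℝ} {l : Filter ℝ}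

theorem enorm_intervalIntegral_le_lintegral_uIoc (ψ : ℝ → E) (a b : ℝ) :
    ‖∫ x in a..b, ψ x‖ₑ ≤ ∫⁻ x in uIoc a b, ‖ψ x‖ₑ := by
  rw [← ofReal_norm, intervalIntegral.norm_integral_eq_norm_integral_uIoc, ofReal_norm]
  exact enorm_integral_le_lintegral_enorm _

theorem tendsto_integral_inv_smul_sub (hψ : LocallyIntegrable ψ)
    (ha : HasDerivAt (fun x ↦ ∫ t in c..x, ψ t) (ψ a) a)
    (hb : HasDerivAt (fun x ↦ ∫ t in c..x, ψ t) (ψ b) b) :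
    Tendsto (fun h ↦ ∫ x in a..b, h⁻¹ • (ψ (x + h) - ψ x)) (𝓝[>] 0) (𝓝 (ψ b - ψ a)) := by
  have hint : ∀ u v, IntervalIntegrable ψ volume u v := fun u v ↦
    (hψ.integrableOn_isCompact isCompact_uIcc).intervalIntegrable
  have hsplit : ∀ h, ∫ x in a..b, h⁻¹ • (ψ (x + h) - ψ x) =
      h⁻¹ • ((∫ t in c..b + h, ψ t) - ∫ t in c..b, ψ t) -
        h⁻¹ • ((∫ t in c..a + h, ψ t) - ∫ t in c..a, ψ t) := fun h ↦ by
    have htrans : IntervalIntegrable (fun x ↦ ψ (x + h)) volume a b := by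
      simpa using (hint (a + h) (b + h)).comp_add_right h
    rw [intervalIntegral.integral_smul, intervalIntegral.integral_sub htrans (hint a b),
      intervalIntegral.integral_comp_add_right, ← smul_sub,
      ← intervalIntegral.integral_interval_sub_left (hint c (b + h)) (hint c (a + h)),
      ← intervalIntegral.integral_interval_sub_left (hint c b) (hint c a)]
    congr 1
    abel
  simp only [hsplit]
  exact hb.tendsto_slope_zero_right.sub ha.tendsto_slope_zero_right

theorem edist_le_liminf_lintegral_diffQuot_of_hasDerivAt (hψ : LocallyIntegrable ψ)
    (ha : HasDerivAt (fun x ↦ ∫ t in c..x, ψ t) (ψ a) a)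
    (hb : HasDerivAt (fun x ↦ ∫ t in c..x, ψ t) (ψ b) b) (hl : l ≤ 𝓝[>] 0) [l.NeBot] :
    edist (ψ a) (ψ b) ≤ liminf (fun h ↦ ∫⁻ x in uIoc a b, diffQuot ψ h x) l := by
  have hlim := ((tendsto_integral_inv_smul_sub hψ ha hb).mono_left hl).enorm.liminf_eq
  rw [edist_comm, edist_eq_enorm_sub, ← hlim]
  refine liminf_le_liminf ?_
  filter_upwards [hl self_mem_nhdsWithin] with h hh
  simp only [diffQuot_eq_enorm_smul ψ hh]
  exact enorm_intervalIntegral_le_lintegral_uIoc _ a b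

variable {Y : Type*} [PseudoMetricSpace Y]

theorem exists_ae_mem_edist_le_liminf_lintegral_diffQuot {f : ℝ → Y} (hf : StronglyMeasurable f)
    [l.NeBot] (hl : l ≤ 𝓝[>] 0) :
    ∃ S : Set ℝ, (∀ᵐ x, x ∈ S) ∧ ∀ a ∈ S, ∀ b ∈ S,
      edist (f a) (f b) ≤ liminf (fun h ↦ ∫⁻ x in uIoc a b, diffQuot f h x) l := by
  obtain ⟨t, htc, htd⟩ := hf.isSeparable_range
  let φ (y : Y) (N : ℕ) (z : Y) : ℝ := min (dist z y) N
  have hφ : ∀ y N, LipschitzWith 1 (φ y N) := fun y N ↦ (LipschitzWith.dist_left y).min_const N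
  have hint : ∀ y N, LocallyIntegrable (φ y N ∘ f) := fun y N ↦
    (locallyIntegrable_const (N : ℝ)).mono
      ((hφ y N).continuous.comp_stronglyMeasurable hf).aestronglyMeasurable
      (.of_forall fun x ↦ by simp [φ, abs_of_nonneg, dist_nonneg])
  refine ⟨{x | ∀ y ∈ t, ∀ N, HasDerivAt (fun x ↦ ∫ s in (0 : ℝ)..x, φ y N (f s)) (φ y N (f x)) x},
    (ae_ball_iff htc).2 fun y _ ↦ ae_all_iff.2 fun N ↦
      (LocallyIntegrable.ae_hasDerivAt_integral (hint y N)).mono fun x hx ↦ hx 0,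
    fun a ha b hb ↦ ?_⟩
  have hφle : ∀ y ∈ t, ∀ N, edist (φ y N (f a)) (φ y N (f b)) ≤
      liminf (fun h ↦ ∫⁻ x in uIoc a b, diffQuot f h x) l := fun y hy N ↦
    (edist_le_liminf_lintegral_diffQuot_of_hasDerivAt (hint y N) (ha y hy N) (hb y hy N)
      hl).trans (liminf_le_liminf (.of_forall fun h ↦
        lintegral_mono fun x ↦ diffQuot_comp_le (hφ y N) f h x))
  have hdist : ∀ y ∈ t, edist (dist (f a) y) (dist (f b) y) ≤
      liminf (fun h ↦ ∫⁻ x in uIoc a b, diffQuot f h x) l := fun y hy ↦ by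
    obtain ⟨N, hN⟩ := exists_nat_ge (max (dist (f a) y) (dist (f b) y))
    simpa only [φ, min_eq_left (le_of_max_le_left hN), min_eq_left (le_of_max_le_right hN)]
      using hφle y hy N
  have hclosed : IsClosed {y | edist (dist (f a) y) (dist (f b) y) ≤
      liminf (fun h ↦ ∫⁻ x in uIoc a b, diffQuot f h x) l} :=
    isClosed_le (by fun_prop) continuous_const
  have hself : edist (dist (f a) (f b)) (dist (f b) (f b)) ≤ _ :=
    closure_minimal hdist hclosed (htd ⟨b, rfl⟩)
  rwa [dist_self, edist_zero_right, Real.enorm_of_nonneg dist_nonneg, ← edist_dist] at hself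

theorem edist_le_liminf_lintegral_diffQuot_of_continuous {g : ℝ → Y} (hg : Continuous g)
    (a b : ℝ) [l.NeBot] (hl : l ≤ 𝓝[>] 0) :
    edist (g a) (g b) ≤ liminf (fun h ↦ ∫⁻ x in uIoc a b, diffQuot g h x) l := by
  let φ (z : Y) : ℝ := dist z (g b)
  have hφ : LipschitzWith 1 φ := .dist_left _
  have hψ : Continuous (φ ∘ g) := hφ.continuous.comp hg
  have hderiv (x : ℝ) := (hψ.integral_hasStrictDerivAt a x).hasDerivAt
  calc edist (g a) (g b) = edist (φ (g a)) (φ (g b)) := by simp [φ, edist_dist]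
    _ ≤ liminf (fun h ↦ ∫⁻ x in uIoc a b, diffQuot (φ ∘ g) h x) l :=
      edist_le_liminf_lintegral_diffQuot_of_hasDerivAt hψ.locallyIntegrable
        (hderiv a) (hderiv b) hl
    _ ≤ _ := liminf_le_liminf (.of_forall fun h ↦
      lintegral_mono fun x ↦ diffQuot_comp_le hφ g h x)

theorem measurable_diffQuot {X : Type*} [PseudoEMetricSpace X] {f : ℝ → X}
    (hf : StronglyMeasurable f) (h : ℝ) : Measurable (diffQuot f h) :=
  ((hf.comp_measurable (measurable_add_const h)).edist hf).measurable.div_const _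

end DifferenceQuotient

section LowerLimitsOfIntegrals

theorem lintegral_le_lintegral_rpow_mul_measure_univ_rpow {α : Type*} [MeasurableSpace α]
    {μ : Measure α} {e : α → ℝ≥0∞} (he : AEMeasurable e μ) {p : ℝ} (hp : 1 ≤ p) :
    ∫⁻ x, e x ∂μ ≤ (∫⁻ x, e x ^ p ∂μ) ^ (1 / p) * μ univ ^ (1 - 1 / p) := by
  simpa [eLpNorm'] using eLpNorm'_le_eLpNorm'_mul_rpow_measure_univ one_pos hp
    he.aestronglyMeasurable

theorem liminf_setLIntegral_le_of_lintegral_rpow_le {α ι : Type*} [MeasurableSpace α]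
    {μ : Measure α} {l : Filter ι} [l.NeBot] {e : ι → α → ℝ≥0∞} {p : ℝ} {C : ℝ≥0∞}
    (he : ∀ i, AEMeasurable (e i) μ) (hp : 1 ≤ p) {A : Set α}
    (hC : ∀ᶠ i in l, ∫⁻ x in A, e i x ^ p ∂μ ≤ C) :
    liminf (fun i ↦ ∫⁻ x in A, e i x ∂μ) l ≤ C ^ (1 / p) * μ A ^ (1 - 1 / p) := by
  refine liminf_le_of_frequently_le' (hC.mono fun i hi ↦ ?_).frequently
  calc ∫⁻ x in A, e i x ∂μ
      ≤ (∫⁻ x in A, e i x ^ p ∂μ) ^ (1 / p) * μ A ^ (1 - 1 / p) := by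
        simpa only [Measure.restrict_apply_univ] using
          lintegral_le_lintegral_rpow_mul_measure_univ_rpow (he i).restrict hp
    _ ≤ _ := by gcongr

theorem sum_liminf_le_liminf_sum {ι κ : Type*} {l : Filter ι} [l.IsCountablyGenerated]
    (s : Finset κ) (F : κ → ι → ℝ≥0∞) :
    ∑ k ∈ s, liminf (F k) l ≤ liminf (fun i ↦ ∑ k ∈ s, F k i) l := by
  let _ : MeasurableSpace κ := ⊤
  simpa [lintegral_finset] using lintegral_liminf_le (u := l) (μ := Measure.count.restrict ↑s)
    (f := fun i k ↦ F k i) fun i ↦ .of_discrete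

theorem setLIntegral_liminf_le_liminf_setLIntegral {α ι : Type*} [MeasurableSpace α]
    {μ : Measure α} {l : Filter ι} [l.IsCountablyGenerated] {F : ι → α → ℝ≥0∞}
    (hF : ∀ i, AEMeasurable (F i) μ) {A : Set α} (hA : MeasurableSet A) {B : ι → Set α}
    (hB : ∀ i, MeasurableSet (B i)) (hAB : ∀ x ∈ A, ∀ᶠ i in l, x ∈ B i) :
    ∫⁻ x in A, liminf (fun i ↦ F i x) l ∂μ ≤ liminf (fun i ↦ ∫⁻ x in B i, F i x ∂μ) l :=
  calc
    _ = ∫⁻ x in A, liminf (fun i ↦ (B i).indicator (F i) x) l ∂μ :=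
      setLIntegral_congr_fun hA fun x hx ↦ liminf_congr <|
        (hAB x hx).mono fun _ hi ↦ (indicator_of_mem hi _).symm
    _ ≤ ∫⁻ x, liminf (fun i ↦ (B i).indicator (F i) x) l ∂μ := setLIntegral_le_lintegral _ _
    _ ≤ liminf (fun i ↦ ∫⁻ x, (B i).indicator (F i) x ∂μ) l :=
      lintegral_liminf_le' fun i ↦ (hF i).indicator (hB i)
    _ = _ := by simp only [lintegral_indicator (hB _)]

variable {ι : Type*} {l : Filter ι} {e : ι → ℝ → ℝ≥0∞} {p : ℝ} {C : ℝ≥0∞} {a b : ℝ}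

theorem sum_edist_le_of_edist_le_liminf {X : Type*} [PseudoEMetricSpace X]
    [l.IsCountablyGenerated] [l.NeBot] {G : ℝ → X} (he : ∀ i, AEMeasurable (e i)) (hp : 1 ≤ p)
    (hC : ∀ᶠ i in l, ∫⁻ x in uIoc a b, e i x ^ p ≤ C)
    (hG : ∀ s ∈ uIcc a b, ∀ t ∈ uIcc a b,
      edist (G s) (G t) ≤ liminf (fun i ↦ ∫⁻ x in uIoc s t, e i x) l)
    {E : ℕ × (ℕ → ℝ × ℝ)} (hE : E ∈ AbsolutelyContinuousOnInterval.disjWithin a b) :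
    ∑ k ∈ Finset.range E.1, edist (G (E.2 k).1) (G (E.2 k).2) ≤
      C ^ (1 / p) * volume (⋃ k ∈ Finset.range E.1, uIoc (E.2 k).1 (E.2 k).2) ^ (1 - 1 / p) :=
  calc
    _ ≤ ∑ k ∈ Finset.range E.1, liminf (fun i ↦ ∫⁻ x in uIoc (E.2 k).1 (E.2 k).2, e i x) l :=
      Finset.sum_le_sum fun k hk ↦ hG _ (hE.1 k hk).1 _ (hE.1 k hk).2
    _ ≤ liminf (fun i ↦ ∑ k ∈ Finset.range E.1, ∫⁻ x in uIoc (E.2 k).1 (E.2 k).2, e i x) l :=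
      sum_liminf_le_liminf_sum ..
    _ = liminf (fun i ↦ ∫⁻ x in ⋃ k ∈ Finset.range E.1, uIoc (E.2 k).1 (E.2 k).2, e i x) l := by
      simp only [lintegral_biUnion_finset hE.2 fun _ _ ↦ measurableSet_uIoc]
    _ ≤ _ :=
      liminf_setLIntegral_le_of_lintegral_rpow_le he hp (hC.mono fun i hi ↦
        (lintegral_mono_set
          (AbsolutelyContinuousOnInterval.biUnion_uIoc_subset_of_mem_disjWithin hE)).trans hi)

theorem absolutelyContinuousOnInterval_of_edist_le_liminf {X : Type*} [PseudoMetricSpace X]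
    [l.IsCountablyGenerated] [l.NeBot] {G : ℝ → X} (he : ∀ i, AEMeasurable (e i)) (hp : 1 < p)
    (hC_top : C ≠ ⊤) (hC : ∀ᶠ i in l, ∫⁻ x in uIoc a b, e i x ^ p ≤ C)
    (hG : ∀ s ∈ uIcc a b, ∀ t ∈ uIcc a b,
      edist (G s) (G t) ≤ liminf (fun i ↦ ∫⁻ x in uIoc s t, e i x) l) :
    AbsolutelyContinuousOnInterval G a b := by
  have hexp : 0 < 1 - 1 / p := sub_pos.2 ((div_lt_one (one_pos.trans hp)).2 hp)
  have hvol := AbsolutelyContinuousOnInterval.tendsto_volume_totalLengthFilter_nhds_zero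
    |>.ennrpow_const (1 - 1 / p)
  rw [ENNReal.zero_rpow_of_pos hexp] at hvol
  have hlim := ENNReal.Tendsto.const_mul hvol
    (.inr (ENNReal.rpow_ne_top_of_nonneg (one_div_nonneg.2 (one_pos.trans hp).le) hC_top))
  rw [mul_zero] at hlim
  have hsum := tendsto_of_tendsto_of_tendsto_of_le_of_le' tendsto_const_nhds
    (hlim.mono_left inf_le_left) (.of_forall fun _ ↦ zero_le)
    (eventually_inf_principal.2 (.of_forall fun E hE ↦
      sum_edist_le_of_edist_le_liminf he hp.le hC hG hE))
  simpa [AbsolutelyContinuousOnInterval, Function.comp_def, ENNReal.toReal_sum, edist_ne_top,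
    dist_edist] using (ENNReal.tendsto_toReal ENNReal.zero_ne_top).comp hsum

theorem holderOnWith_of_edist_le_liminf {X : Type*} [PseudoEMetricSpace X] [l.NeBot] {G : ℝ → X}
    {T : Set ℝ} {C : ℝ≥0} (he : ∀ i, AEMeasurable (e i)) (hp : 1 ≤ p)
    (hC : ∀ s ∈ T, ∀ t ∈ T, ∀ᶠ i in l, ∫⁻ x in uIoc s t, e i x ^ p ≤ C)
    (hG : ∀ s ∈ T, ∀ t ∈ T,
      edist (G s) (G t) ≤ liminf (fun i ↦ ∫⁻ x in uIoc s t, e i x) l) :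
    HolderOnWith (C ^ (1 / p)) (1 - 1 / p).toNNReal G T := fun s hs t ht ↦ by
  have hexp : 0 ≤ 1 - 1 / p := sub_nonneg.2 ((div_le_one (one_pos.trans_le hp)).2 hp)
  have hp0 : 0 ≤ 1 / p := by positivity
  have hvol : volume (uIoc s t) = edist s t := by
    rw [Real.volume_uIoc, edist_dist, dist_comm, Real.dist_eq]
  rw [ENNReal.coe_rpow_of_nonneg _ hp0, Real.coe_toNNReal _ hexp, ← hvol]
  exact (hG s hs t ht).trans (liminf_setLIntegral_le_of_lintegral_rpow_le he hp (hC s hs t ht))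

end LowerLimitsOfIntegrals

section Energy

/-- The `p`-energy at scale `h` of a curve `f` on `[a, b]`, the integral of the `p`-th power of its
difference quotient. The domain `[a, b - h]` keeps both `x` and `x + h` in `[a, b]`. -/
noncomputable def sobolevEnergy {X : Type*} [PseudoEMetricSpace X] (p : ℝ) (f : ℝ → X)
    (a b h : ℝ) : ℝ≥0∞ :=
  ∫⁻ x in Icc a (b - h), diffQuot f h x ^ p

theorem sobolevEnergy_congr_ae {X : Type*} [PseudoEMetricSpace X] {f g : ℝ → X} {a b h : ℝ}
    (hfg : f =ᵐ[volume.restrict (Icc a b)] g) (hh : 0 ≤ h) (p : ℝ) :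
    sobolevEnergy p f a b h = sobolevEnergy p g a b h := by
  have hae : ∀ᵐ x, x ∈ Icc a b → f x = g x := (ae_restrict_iff' measurableSet_Icc).1 hfg
  have htrans : ∀ᵐ x, x + h ∈ Icc a b → f (x + h) = g (x + h) :=
    (measurePreserving_add_right volume h).quasiMeasurePreserving.ae hae
  refine lintegral_congr_ae ((ae_restrict_iff' measurableSet_Icc).2 ?_)
  filter_upwards [hae, htrans] with x hx hxh hmem
  have hxmem : x ∈ Icc a b := ⟨hmem.1, by linarith [hmem.2]⟩
  have hxhmem : x + h ∈ Icc a b := ⟨by linarith [hmem.1], by linarith [hmem.2]⟩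
  simp only [diffQuot, hx hxmem, hxh hxhmem]

theorem exists_seq_sobolevEnergy_le {X : Type*} [PseudoEMetricSpace X] {p : ℝ} {f : ℝ → X}
    {a b : ℝ} (hE : liminf (sobolevEnergy p f a b) (𝓝[>] 0) < ⊤) :
    ∃ (C : ℝ≥0) (h : ℕ → ℝ), Tendsto h atTop (𝓝[>] 0) ∧ (∀ n, 0 < h n) ∧
      ∀ n, sobolevEnergy p f a b (h n) ≤ C := by
  obtain ⟨C, hC, -⟩ := ENNReal.lt_iff_exists_nnreal_btwn.1 hE
  have hfreq : ∃ᶠ h in 𝓝[>] (0 : ℝ), 0 < h ∧ sobolevEnergy p f a b h < C :=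
    (frequently_lt_of_liminf_lt (by isBoundedDefault) hC).and_eventually
      self_mem_nhdsWithin |>.mono fun _ h ↦ h.symm
  obtain ⟨h, hh, hhC⟩ := exists_seq_forall_of_frequently hfreq
  exact ⟨C, h, hh, fun n ↦ (hhC n).1, fun n ↦ (hhC n).2.le⟩

theorem liminf_sobolevEnergy_le_iSup {X : Type*} [PseudoMetricSpace X] {p : ℝ} (hp : 0 ≤ p)
    (f : ℝ → X) {a b δ : ℝ} (hδ : 0 < δ) :
    liminf (sobolevEnergy p f a b) (𝓝[>] 0) ≤ ⨆ (h : ℝ) (_ : 0 < h) (_ : h < δ),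
      ∫⁻ u in Icc a (b - h), ENNReal.ofReal ((dist (f (u + h)) (f u) / h) ^ p) := by
  refine liminf_le_of_frequently_le' (Eventually.frequently ?_)
  filter_upwards [Ioo_mem_nhdsGT hδ] with h hh
  refine le_trans (le_of_eq (lintegral_congr fun u ↦ ?_))
    (le_iSup_of_le h (le_iSup_of_le hh.1 (le_iSup_of_le hh.2 le_rfl)))
  rw [diffQuot, edist_dist, ← ENNReal.ofReal_div_of_pos hh.1, ENNReal.ofReal_rpow_of_nonneg
    (div_nonneg dist_nonneg hh.1.le) hp]

theorem eventually_uIoc_subset_Icc_sub {l : Filter ℝ} (hl : l ≤ 𝓝 0) {a b s t : ℝ}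
    (hs : s ∈ Ico a b) (ht : t ∈ Ico a b) : ∀ᶠ h in l, uIoc s t ⊆ Icc a (b - h) := by
  have hlt : ∀ᶠ h in l, h < b - max s t := hl (eventually_lt_nhds (sub_pos.2 (max_lt hs.2 ht.2)))
  filter_upwards [hlt] with h hh x hx
  exact ⟨(le_min hs.1 ht.1).trans hx.1.le, hx.2.trans (by linarith)⟩

theorem eventually_setLIntegral_uIoc_diffQuot_rpow_le {Y : Type*} [PseudoEMetricSpace Y]
    {f : ℝ → Y} {p a b : ℝ} {l : Filter ℝ} (hl : l ≤ 𝓝 0) {C : ℝ≥0∞}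
    (hC : ∀ᶠ h in l, sobolevEnergy p f a b h ≤ C) {s t : ℝ} (hs : s ∈ Ico a b) (ht : t ∈ Ico a b) :
    ∀ᶠ h in l, ∫⁻ x in uIoc s t, diffQuot f h x ^ p ≤ C := by
  filter_upwards [hC, eventually_uIoc_subset_Icc_sub hl hs ht] with h hh hsub
  exact (lintegral_mono_set hsub).trans hh

end Energy

section ContinuousRepresentative

theorem continuousOn_extendFrom_closure_of_uniformContinuousOn {X Z : Type*} [UniformSpace X]
    [UniformSpace Z] [CompleteSpace Z] {f : X → Z} {A : Set X} (hf : UniformContinuousOn f A) :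
    ContinuousOn (extendFrom A f) (closure A) := by
  refine continuousOn_extendFrom Subset.rfl fun x hx ↦ ?_
  have : (𝓝[A] x).NeBot := mem_closure_iff_nhdsWithin_neBot.1 hx
  refine cauchy_map_iff_exists_tendsto.1 (cauchy_map_iff.2 ⟨this, hf.mono_left (le_inf ?_ ?_)⟩)
  · exact (cauchy_nhds.mono nhdsWithin_le_nhds).2
  · rw [← prod_principal_principal]
    exact prod_mono inf_le_right inf_le_right

theorem exists_continuous_eqOn_of_uniformContinuousOn {Y : Type*} [UniformSpace Y]
    [CompleteSpace Y] [T0Space Y] {f : ℝ → Y} {a b : ℝ} {T : Set ℝ}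
    (hf : UniformContinuousOn f T) (hab : a ≤ b) (hT : T ⊆ Icc a b) (hdense : Icc a b ⊆ closure T) :
    ∃ g : ℝ → Y, Continuous g ∧ EqOn f g T := by
  have hcont := (continuousOn_extendFrom_closure_of_uniformContinuousOn hf).mono hdense
  refine ⟨IccExtend hab ((Icc a b).domRestrict (extendFrom T f)),
    hcont.domRestrict.Icc_extend', fun x hx ↦ ?_⟩
  rw [IccExtend_of_mem hab _ (hT hx)]
  exact (extendFrom_extends hf.continuousOn x hx).symm

theorem exists_continuous_ae_eq_of_sobolevEnergy_le {Y : Type*} [MetricSpace Y] [CompleteSpace Y]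
    {f : ℝ → Y} {p a b : ℝ} {l : Filter ℝ} [l.NeBot] (hf : StronglyMeasurable f) (hp : 1 < p)
    (hab : a < b) (hl : l ≤ 𝓝[>] 0) {C : ℝ≥0}
    (hC : ∀ᶠ h in l, sobolevEnergy p f a b h ≤ C) :
    ∃ g : ℝ → Y, Continuous g ∧ f =ᵐ[volume.restrict (Icc a b)] g := by
  obtain ⟨S, hS, hfS⟩ := exists_ae_mem_edist_le_liminf_lintegral_diffQuot hf hl
  have hholder : HolderOnWith (C ^ (1 / p)) (1 - 1 / p).toNNReal f (Ioo a b ∩ S) :=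
    holderOnWith_of_edist_le_liminf (fun h ↦ (measurable_diffQuot hf h).aemeasurable) hp.le
      (fun s hs t ht ↦ eventually_setLIntegral_uIoc_diffQuot_rpow_le
        (hl.trans nhdsWithin_le_nhds) hC (Ioo_subset_Ico_self hs.1) (Ioo_subset_Ico_self ht.1))
      fun s hs t ht ↦ hfS s hs.2 t ht.2
  have hexp : 0 < 1 - 1 / p := sub_pos.2 ((div_lt_one (one_pos.trans hp)).2 hp)
  have hdense : Icc a b ⊆ closure (Ioo a b ∩ S) := by
    rw [← closure_Ioo hab.ne]
    exact closure_minimal ((Measure.dense_of_ae hS).open_subset_closure_inter isOpen_Ioo)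
      isClosed_closure
  obtain ⟨g, hg, hfg⟩ := exists_continuous_eqOn_of_uniformContinuousOn
    (hholder.uniformContinuousOn (Real.toNNReal_pos.2 hexp)) hab.le
    (inter_subset_left.trans Ioo_subset_Icc_self) hdense
  refine ⟨g, hg, ?_⟩
  rw [Filter.EventuallyEq, ← restrict_Ioo_eq_restrict_Icc]
  exact (ae_restrict_iff' measurableSet_Ioo).2 (hS.mono fun x hx hmem ↦ hfg ⟨hmem, hx⟩)

end ContinuousRepresentative

section MetricDerivative

theorem absolutelyContinuousOnInterval_comp_of_lipschitzWith {X Z : Type*} [PseudoMetricSpace X]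
    [PseudoMetricSpace Z] {φ : X → Z} {K : ℝ≥0} (hφ : LipschitzWith K φ) {g : ℝ → X} {a b : ℝ}
    (hg : AbsolutelyContinuousOnInterval g a b) : AbsolutelyContinuousOnInterval (φ ∘ g) a b := by
  have hlim := Tendsto.const_mul (K : ℝ) hg
  rw [mul_zero] at hlim
  refine squeeze_zero (fun _ ↦ Finset.sum_nonneg fun _ _ ↦ dist_nonneg) (fun E ↦ ?_) hlim
  rw [Finset.mul_sum]
  exact Finset.sum_le_sum fun k _ ↦ hφ.dist_le_mul _ _

theorem tendsto_diffQuot_of_hasDerivAt {E : Type*} [NormedAddCommGroup E] [NormedSpace ℝ E]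
    {ψ : ℝ → E} {ψ' : E} {x : ℝ} (hψ : HasDerivAt ψ ψ' x) :
    Tendsto (fun h ↦ diffQuot ψ h x) (𝓝[>] 0) (𝓝 ‖ψ'‖ₑ) :=
  hψ.tendsto_slope_zero_right.enorm.congr' <| by
    filter_upwards [self_mem_nhdsWithin] with h hh using (diffQuot_eq_enorm_smul ψ hh x).symm

/-- The lower limit of the difference quotients of `g` at `x` as the scale tends to `0` along `l`;
for `l = 𝓝[>] 0` it is the lower right metric derivative. A general filter is allowed since energy
bounds and measurability are only available along a sequence of scales. -/
noncomputable def lowerMetricDeriv {X : Type*} [PseudoEMetricSpace X] (l : Filter ℝ) (g : ℝ → X)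
    (x : ℝ) : ℝ≥0∞ :=
  liminf (fun h ↦ diffQuot g h x) l

theorem measurable_lowerMetricDeriv_map {X : Type*} [PseudoEMetricSpace X] {g : ℝ → X}
    (hg : StronglyMeasurable g) (h : ℕ → ℝ) : Measurable (lowerMetricDeriv (map h atTop) g) :=
  Measurable.liminf fun n ↦ measurable_diffQuot hg (h n)

theorem edist_le_lintegral_lowerMetricDeriv {X : Type*} [PseudoMetricSpace X] {g : ℝ → X}
    {a b : ℝ} {l : Filter ℝ} (hg : AbsolutelyContinuousOnInterval g a b) [l.NeBot]
    (hl : l ≤ 𝓝[>] 0) : edist (g a) (g b) ≤ ∫⁻ x in uIoc a b, lowerMetricDeriv l g x := by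
  let ψ (x : ℝ) : ℝ := dist (g x) (g a)
  have hψ : AbsolutelyContinuousOnInterval ψ a b :=
    absolutelyContinuousOnInterval_comp_of_lipschitzWith (.dist_left (g a)) hg
  calc
    edist (g a) (g b) = ‖∫ x in a..b, deriv ψ x‖ₑ := by
      rw [hψ.integral_deriv_eq_sub, edist_comm, edist_dist]
      simp [ψ, Real.enorm_of_nonneg]
    _ ≤ ∫⁻ x in uIoc a b, ‖deriv ψ x‖ₑ := enorm_intervalIntegral_le_lintegral_uIoc _ a b
    _ ≤ _ := by
      refine lintegral_mono_ae ((ae_restrict_iff' measurableSet_uIoc).2 ?_)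
      filter_upwards [hψ.ae_differentiableAt] with x hx hmem
      have hlim := (tendsto_diffQuot_of_hasDerivAt
        (hx (uIoc_subset_uIcc hmem)).hasDerivAt).mono_left hl
      rw [← hlim.liminf_eq]
      exact liminf_le_liminf (.of_forall fun h ↦ diffQuot_comp_le (.dist_left (g a)) g h x)

theorem lintegral_lowerMetricDeriv_rpow_le {X : Type*} [PseudoEMetricSpace X] {g : ℝ → X}
    {l : Filter ℝ} [l.IsCountablyGenerated] {p : ℝ} (hg : StronglyMeasurable g) (hp : 0 < p)
    (hl : l ≤ 𝓝 0) (a b : ℝ) :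
    ∫⁻ x in Icc a b, lowerMetricDeriv l g x ^ p ≤ liminf (sobolevEnergy p g a b) l := by
  have hrpow (x : ℝ) : lowerMetricDeriv l g x ^ p = liminf (fun h ↦ diffQuot g h x ^ p) l :=
    (ENNReal.orderIsoRpow p hp).liminf_apply
  simp only [hrpow, ← restrict_Ico_eq_restrict_Icc]
  exact setLIntegral_liminf_le_liminf_setLIntegral
    (fun h ↦ ((measurable_diffQuot hg h).pow_const p).aemeasurable) measurableSet_Ico
    (fun _ ↦ measurableSet_Icc) fun x hx ↦ by
      filter_upwards [hl (eventually_lt_nhds (sub_pos.2 hx.2))] with h hh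
      exact ⟨hx.1, by linarith⟩

/-- `g` is a curve of class `AC^p` on `[a, b]`: the distances between its points are bounded by the
integrals of a nonnegative function `m` with finite `p`-th moment. For `1 ≤ p` such an `m` is
integrable on `[a, b]`, so the integrals of `m` are not junk values. -/
def MemACp {X : Type*} [PseudoMetricSpace X] (p : ℝ) (g : ℝ → X) (a b : ℝ) : Prop :=
  ∃ m : ℝ → ℝ, Measurable m ∧ (∀ r ∈ Icc a b, 0 ≤ m r) ∧
    (∫⁻ r in Icc a b, ENNReal.ofReal (m r ^ p)) < ⊤ ∧
    ∀ u v : ℝ, a ≤ u → u ≤ v → v ≤ b → dist (g u) (g v) ≤ ∫ r in u..v, m r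

theorem memACp_of_edist_le_lintegral {X : Type*} [PseudoMetricSpace X] {p : ℝ} {g : ℝ → X}
    {a b : ℝ} {m : ℝ → ℝ≥0∞} (hp : 1 ≤ p) (hm : Measurable m)
    (hmp : ∫⁻ r in Icc a b, m r ^ p < ⊤)
    (hgm : ∀ u v, a ≤ u → u ≤ v → v ≤ b → edist (g u) (g v) ≤ ∫⁻ r in Ioc u v, m r) :
    MemACp p g a b := by
  have hp0 : 0 < p := one_pos.trans_le hp
  have hm1 : ∫⁻ r in Icc a b, m r ≠ ⊤ :=
    ((lintegral_le_lintegral_rpow_mul_measure_univ_rpow hm.aemeasurable hp).trans_lt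
      (ENNReal.mul_lt_top (ENNReal.rpow_lt_top_of_nonneg (by positivity) hmp.ne)
        (ENNReal.rpow_lt_top_of_nonneg (sub_nonneg.2 ((div_le_one hp0).2 hp))
          (measure_ne_top _ _)))).ne
  refine ⟨fun r ↦ (m r).toReal, hm.ennreal_toReal, fun _ _ ↦ ENNReal.toReal_nonneg,
    (lintegral_mono fun r ↦ ?_).trans_lt hmp, fun u v hu huv hv ↦ ?_⟩
  · rw [ENNReal.toReal_rpow]
    exact ENNReal.ofReal_toReal_le
  · have hsub : Ioc u v ⊆ Icc a b := Ioc_subset_Icc_self.trans (Icc_subset_Icc hu hv)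
    have hfin : ∫⁻ r in Ioc u v, m r ≠ ⊤ := ((lintegral_mono_set hsub).trans_lt hm1.lt_top).ne
    rw [intervalIntegral.integral_of_le huv, integral_toReal hm.aemeasurable
      (ae_lt_top hm hfin), dist_edist]
    exact ENNReal.toReal_mono hfin (hgm u v hu huv hv)

theorem edist_le_lintegral_lowerMetricDeriv_of_sobolevEnergy_le {X : Type*} [PseudoMetricSpace X]
    {p : ℝ} {g : ℝ → X} {a b : ℝ} {l : Filter ℝ} [l.NeBot] [l.IsCountablyGenerated]
    (hg : Continuous g) (hp : 1 < p) (hl : l ≤ 𝓝[>] 0) {C : ℝ≥0}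
    (hC : ∀ᶠ h in l, sobolevEnergy p g a b h ≤ C) {u v : ℝ} (hu : a ≤ u) (huv : u ≤ v)
    (hv : v ≤ b) : edist (g u) (g v) ≤ ∫⁻ r in Ioc u v, lowerMetricDeriv l g r := by
  have hlt : ∀ w ∈ Ioo u v, edist (g u) (g w) ≤ ∫⁻ r in Ioc u v, lowerMetricDeriv l g r := by
    intro w hw
    have hac : AbsolutelyContinuousOnInterval g u w :=
      absolutelyContinuousOnInterval_of_edist_le_liminf
        (fun h ↦ (measurable_diffQuot hg.stronglyMeasurable h).aemeasurable) hp ENNReal.coe_ne_top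
        (eventually_setLIntegral_uIoc_diffQuot_rpow_le (hl.trans nhdsWithin_le_nhds) hC
          ⟨hu, (hw.1.trans hw.2).trans_le hv⟩ ⟨hu.trans hw.1.le, hw.2.trans_le hv⟩)
        fun s _ t _ ↦ edist_le_liminf_lintegral_diffQuot_of_continuous hg s t hl
    refine (edist_le_lintegral_lowerMetricDeriv hac hl).trans (lintegral_mono_set ?_)
    rw [uIoc_of_le hw.1.le]
    exact Ioc_subset_Ioc_right hw.2.le
  obtain rfl | huv := huv.eq_or_lt
  · simp
  · have hclosed : IsClosed {w | edist (g u) (g w) ≤ ∫⁻ r in Ioc u v, lowerMetricDeriv l g r} :=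
      isClosed_le (by fun_prop) continuous_const
    exact closure_minimal hlt hclosed (closure_Ioo huv.ne ▸ right_mem_Icc.2 huv.le)

theorem memACp_of_sobolevEnergy_le {X : Type*} [PseudoMetricSpace X] {p : ℝ} {g : ℝ → X}
    {a b : ℝ} {h : ℕ → ℝ} (hg : Continuous g) (hp : 1 < p) (hh : Tendsto h atTop (𝓝[>] 0))
    {C : ℝ≥0} (hC : ∀ n, sobolevEnergy p g a b (h n) ≤ C) : MemACp p g a b := by
  have hC_map : ∀ᶠ t in map h atTop, sobolevEnergy p g a b t ≤ C := eventually_map.2 (.of_forall hC)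
  have hle : liminf (sobolevEnergy p g a b) (map h atTop) ≤ C :=
    liminf_le_of_frequently_le' hC_map.frequently
  exact memACp_of_edist_le_lintegral hp.le (measurable_lowerMetricDeriv_map hg.stronglyMeasurable h)
    ((lintegral_lowerMetricDeriv_rpow_le hg.stronglyMeasurable (one_pos.trans hp)
      (hh.trans nhdsWithin_le_nhds) a b).trans hle |>.trans_lt ENNReal.coe_lt_top)
    fun u v hu huv hv ↦ edist_le_lintegral_lowerMetricDeriv_of_sobolevEnergy_le hg hp hh
      hC_map hu huv hv

end MetricDerivative

theorem sobolev_has_acp_representative_general {Y : Type*} [MetricSpace Y] [CompleteSpace Y]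
    {p : ℝ} (hp : 1 < p) {a b : ℝ} (hab : a < b) {f : ℝ → Y}
    (hf : AEStronglyMeasurable f (volume.restrict (Icc a b)))
    (hE : liminf (sobolevEnergy p f a b) (𝓝[>] 0) < ⊤) :
    ∃ g : ℝ → Y, MemACp p g a b ∧ ContinuousOn g (Icc a b) ∧
      ∀ᵐ u ∂volume.restrict (Icc a b), f u = g u := by
  obtain ⟨C, h, hh, hpos, hC⟩ := exists_seq_sobolevEnergy_le hE
  have hC_of_ae {g : ℝ → Y} (hfg : f =ᵐ[volume.restrict (Icc a b)] g) (n : ℕ) :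
      sobolevEnergy p g a b (h n) ≤ C :=
    (sobolevEnergy_congr_ae hfg (hpos n).le p).symm.trans_le (hC n)
  obtain ⟨g, hg, hmkg⟩ := exists_continuous_ae_eq_of_sobolevEnergy_le hf.stronglyMeasurable_mk hp
    hab (l := map h atTop) hh (eventually_map.2 (.of_forall (hC_of_ae hf.ae_eq_mk)))
  have hfg : f =ᵐ[volume.restrict (Icc a b)] g := hf.ae_eq_mk.trans hmkg
  exact ⟨g, memACp_of_sobolevEnergy_le hg hp hh (hC_of_ae hfg), hg.continuousOn, hfg⟩

/-- A Borel function `f : [0,1] → Y` with finite `p`-th moment and finite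
Sobolev `W^{1,p}` energy admits an `AC^p` (in particular continuous) representative. -/
theorem sobolev_has_acp_representative {Y : Type*} [MetricSpace Y] [CompleteSpace Y]
    [MeasurableSpace Y] [BorelSpace Y]
    (p : ℝ) (hp : 1 < p) (f : ℝ → Y) (hf : Measurable f)
    (y₀ : Y)
    (hint : ∫⁻ u in Icc (0:ℝ) 1, ENNReal.ofReal (dist (f u) y₀ ^ p) < ⊤)
    (hsob : (⨆ (h : ℝ) (_ : 0 < h) (_ : h < 1),
      ∫⁻ u in Icc (0:ℝ) (1 - h),
        ENNReal.ofReal ((dist (f (u + h)) (f u) / h) ^ p)) < ⊤) :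
    ∃ g : ℝ → Y,
      (∃ m : ℝ → ℝ, Measurable m ∧ (∀ r ∈ Icc (0:ℝ) 1, 0 ≤ m r) ∧
        (∫⁻ r in Icc (0:ℝ) 1, ENNReal.ofReal (m r ^ p)) < ⊤ ∧
        ∀ u v : ℝ, 0 ≤ u → u ≤ v → v ≤ 1 → dist (g u) (g v) ≤ ∫ r in u..v, m r) ∧
      ContinuousOn g (Icc (0:ℝ) 1) ∧
      (∀ᵐ u ∂(volume.restrict (Icc (0:ℝ) 1)), f u = g u) :=
  sobolev_has_acp_representative_general hp one_pos
    (stronglyMeasurable_of_measurable_standardBorelSpace hf).aestronglyMeasurable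
    ((liminf_sobolevEnergy_le_iSup (one_pos.trans hp).le f one_pos).trans_lt hsob)
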